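/- Let Ω = (a,b) × (c,d) be an open rectangle in ℝ², let 0 < α₁ < 1 and 0 < α₂ < 1, and let v : ℝ² → ℝ be smooth with compact support contained in Ω. Then the gradient–fractional-integral form is coercive: ∫_Ω [ (∂_x v)(x,y) · (𝓘_x^{α₁} ∂_x v)(x,y) + (∂_y v)(x,y) · (𝓘_y^{α₂} ∂_y v)(x,y) ] dx dy ≥ min(cos(α₁π/2), cos(α₂π/2)) · ∫_Ω [ ((𝓘_x^{α₁/2} ∂_x v)(x,y))² + ((𝓘_y^{α₂/2} ∂_y v)(x,y))² ] dx dy. -/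

import Mathlib

open MeasureTheory Real Set

/-- Partial left Riemann–Liouville fractional integral in the `x`-variable, base point `a`:
`(𝓘_x^{α} p)(x,y) = (1/Γ(α)) ∫_a^x (x−s)^{α−1} p(s,y) ds`. -/
noncomputable def leftRLx (a α : ℝ) (p : ℝ × ℝ → ℝ) (z : ℝ × ℝ) : ℝ :=
  (1 / Real.Gamma α) * ∫ s in a..z.1, (z.1 - s) ^ (α - 1) * p (s, z.2)

/-- Partial left Riemann–Liouville fractional integral in the `y`-variable, base point `c`:
`(𝓘_y^{α} p)(x,y) = (1/Γ(α)) ∫_c^y (y−t)^{α−1} p(x,t) dt`. -/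
noncomputable def leftRLy (c α : ℝ) (p : ℝ × ℝ → ℝ) (z : ℝ × ℝ) : ℝ :=
  (1 / Real.Gamma α) * ∫ t in c..z.2, (z.2 - t) ^ (α - 1) * p (z.1, t)

/-- Partial derivative with respect to the first variable. -/
noncomputable def partialX (v : ℝ × ℝ → ℝ) (z : ℝ × ℝ) : ℝ :=
  fderiv ℝ v z (1, 0)

/-- Partial derivative with respect to the second variable. -/
noncomputable def partialY (v : ℝ × ℝ → ℝ) (z : ℝ × ℝ) : ℝ :=
  fderiv ℝ v z (0, 1)

/-!
Extend `p` by zero outside `Ω` and let `A(h) = ∫ p(z) p(z - h e) dz` be its autocorrelation in a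
coordinate direction `e`. With `g_α(t) = t₊ ^ (α - 1) / Γ(α)`, Fubini's theorem gives
`∫ p (g_α ∗ p) = ∫ g_α(h) A(h) dh` and
`∫ (g_{α/2} ∗ p)² = ∫ (∫ g_{α/2}(u) g_{α/2}(u + h) du) A(h) dh`. Both `A` and the inner integral are
even in `h`, and Euler's second beta integral together with the reflection formula for `Γ` yields
`2 cos(απ/2) ∫ g_{α/2}(u) g_{α/2}(u + h) du = g_α(h) + g_α(-h)` for `h ≠ 0`.
Hence `cos(απ/2) ∫ (g_{α/2} ∗ p)² = ∫ p (g_α ∗ p)` with equality on the whole space, and the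
inequality on `Ω` only comes from discarding the part of the left-hand side outside `Ω`.
-/

section Kernel

theorem integral_rpow_mul_exp_neg_mul_Ioi_eq_Gamma_mul {a r : ℝ} (ha : 0 < a) (hr : 0 < r) :
    ∫ t in Ioi (0 : ℝ), t ^ (a - 1) * exp (-(r * t)) = Gamma a * r ^ (-a) := by
  rw [integral_rpow_mul_exp_neg_mul_Ioi ha hr, one_div, inv_rpow hr.le, rpow_neg hr.le, mul_comm]

theorem integrableOn_rpow_mul_exp_neg_mul_Ioi {a r : ℝ} (ha : 0 < a) (hr : 0 < r) :
    IntegrableOn (fun t : ℝ => t ^ (a - 1) * exp (-(r * t))) (Ioi 0) := by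
  simpa only [rpow_one, neg_mul] using
    integrableOn_rpow_mul_exp_neg_mul_rpow (s := a - 1) (by linarith) one_pos hr

/-- The joint integrand behind Euler's second beta integral `∫ u ^ (a - 1) * (u + h) ^ (-b)` over
`u > 0`: integrating out `q.2` produces `Γ(b)` times that integrand, integrating out `q.1` first
produces a Gamma integral. -/
noncomputable def betaLaplaceIntegrand (a b h : ℝ) (q : ℝ × ℝ) : ℝ :=
  q.1 ^ (a - 1) * (q.2 ^ (b - 1) * exp (-((q.1 + h) * q.2)))

theorem betaLaplaceIntegrand_eq (a b h u τ : ℝ) :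
    betaLaplaceIntegrand a b h (u, τ) =
      τ ^ (b - 1) * exp (-(h * τ)) * (u ^ (a - 1) * exp (-(τ * u))) := by
  rw [betaLaplaceIntegrand, show -((u + h) * τ) = -(h * τ) + -(τ * u) by ring, exp_add]
  ring

theorem integral_betaLaplaceIntegrand_fst {a b h τ : ℝ} (ha : 0 < a) (hτ : 0 < τ) :
    ∫ u in Ioi (0 : ℝ), betaLaplaceIntegrand a b h (u, τ) =
      Gamma a * (τ ^ (b - a - 1) * exp (-(h * τ))) := by
  simp only [betaLaplaceIntegrand_eq]
  rw [integral_const_mul, integral_rpow_mul_exp_neg_mul_Ioi_eq_Gamma_mul ha hτ,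
    show b - a - 1 = b - 1 + -a by ring, rpow_add hτ]
  ring

theorem integral_betaLaplaceIntegrand_snd {a b h u : ℝ} (hb : 0 < b) (hh : 0 < h) (hu : 0 < u) :
    ∫ τ in Ioi (0 : ℝ), betaLaplaceIntegrand a b h (u, τ) =
      Gamma b * (u ^ (a - 1) * (u + h) ^ (-b)) := by
  simp only [betaLaplaceIntegrand]
  rw [integral_const_mul, integral_rpow_mul_exp_neg_mul_Ioi_eq_Gamma_mul hb (add_pos hu hh)]
  ring

theorem integrable_betaLaplaceIntegrand {a b h : ℝ} (ha : 0 < a) (hab : a < b) (hh : 0 < h) :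
    Integrable (betaLaplaceIntegrand a b h)
      ((volume.restrict (Ioi 0)).prod (volume.restrict (Ioi 0))) := by
  have hmeas : Measurable (betaLaplaceIntegrand a b h) := by
    unfold betaLaplaceIntegrand
    fun_prop
  rw [integrable_prod_iff' hmeas.aestronglyMeasurable]
  constructor
  · filter_upwards [ae_restrict_mem measurableSet_Ioi] with τ hτ
    simp only [betaLaplaceIntegrand_eq]
    exact (integrableOn_rpow_mul_exp_neg_mul_Ioi ha hτ).const_mul _
  · refine ((integrableOn_rpow_mul_exp_neg_mul_Ioi (sub_pos.2 hab) hh).const_mul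
      (Gamma a)).congr ?_
    filter_upwards [ae_restrict_mem measurableSet_Ioi] with τ hτ
    rw [← integral_betaLaplaceIntegrand_fst ha hτ]
    refine setIntegral_congr_fun measurableSet_Ioi fun u hu => (norm_of_nonneg ?_).symm
    have hu : 0 < u := hu
    have hτ : 0 < τ := hτ
    unfold betaLaplaceIntegrand
    positivity

theorem integrableOn_rpow_mul_add_rpow_neg {a b h : ℝ} (ha : 0 < a) (hab : a < b) (hh : 0 < h) :
    IntegrableOn (fun u : ℝ => u ^ (a - 1) * (u + h) ^ (-b)) (Ioi 0) := by
  have hb : 0 < b := ha.trans hab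
  refine ((integrable_betaLaplaceIntegrand ha hab hh).integral_prod_left.const_mul
    (Gamma b)⁻¹).congr ?_
  filter_upwards [ae_restrict_mem measurableSet_Ioi] with u hu
  rw [integral_betaLaplaceIntegrand_snd hb hh hu, inv_mul_cancel_left₀ (Gamma_pos_of_pos hb).ne']

theorem integral_rpow_mul_add_rpow_neg {a b h : ℝ} (ha : 0 < a) (hab : a < b) (hh : 0 < h) :
    ∫ u in Ioi (0 : ℝ), u ^ (a - 1) * (u + h) ^ (-b) =
      Gamma a * Gamma (b - a) / Gamma b * h ^ (a - b) := by
  have hb : 0 < b := ha.trans hab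
  have fubini := integral_integral_swap (f := fun u τ => betaLaplaceIntegrand a b h (u, τ))
    (integrable_betaLaplaceIntegrand ha hab hh)
  rw [setIntegral_congr_fun (f := fun u => ∫ τ in Ioi 0, betaLaplaceIntegrand a b h (u, τ))
      measurableSet_Ioi fun u => integral_betaLaplaceIntegrand_snd hb hh,
    setIntegral_congr_fun (f := fun τ => ∫ u in Ioi 0, betaLaplaceIntegrand a b h (u, τ))
      measurableSet_Ioi fun τ => integral_betaLaplaceIntegrand_fst ha,
    integral_const_mul, integral_const_mul,
    integral_rpow_mul_exp_neg_mul_Ioi_eq_Gamma_mul (sub_pos.2 hab) hh, neg_sub] at fubini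
  rw [div_mul_eq_mul_div, eq_div_iff (Gamma_pos_of_pos hb).ne', mul_comm, fubini, mul_assoc]

theorem cos_mul_pi_div_two_pos {α : ℝ} (hα : -1 < α) (hα' : α < 1) : 0 < cos (α * π / 2) :=
  cos_pos_of_mem_Ioo ⟨by nlinarith [pi_pos], by nlinarith [pi_pos]⟩

theorem two_mul_cos_mul_Gamma_mul_Gamma_one_sub {α : ℝ} (hα : cos (α * π / 2) ≠ 0) :
    2 * cos (α * π / 2) * (Gamma α * Gamma (1 - α)) = Gamma (α / 2) * Gamma (1 - α / 2) := by
  rw [Gamma_mul_Gamma_one_sub, Gamma_mul_Gamma_one_sub,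
    show π * α = 2 * (α * π / 2) by ring, show π * (α / 2) = α * π / 2 by ring, sin_two_mul]
  field_simp

/-- The Riemann–Liouville kernel `t₊ ^ (α - 1) / Γ(α)`, whose convolution with a function is its
fractional integral of order `α` from `-∞`. -/
noncomputable def rlKernel (α : ℝ) : ℝ → ℝ :=
  (Ioi 0).indicator fun t => (Gamma α)⁻¹ * t ^ (α - 1)

variable {α t h L : ℝ}

theorem rlKernel_of_pos (ht : 0 < t) : rlKernel α t = (Gamma α)⁻¹ * t ^ (α - 1) :=
  indicator_of_mem (mem_Ioi.2 ht) _

theorem rlKernel_of_nonpos (ht : t ≤ 0) : rlKernel α t = 0 :=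
  indicator_of_notMem (notMem_Ioi.2 ht) _

theorem rlKernel_nonneg (hα : 0 ≤ α) (t : ℝ) : 0 ≤ rlKernel α t :=
  indicator_nonneg (fun _ ht => mul_nonneg (inv_nonneg.2 (Gamma_nonneg_of_nonneg hα))
    (rpow_nonneg (le_of_lt ht) _)) t

@[fun_prop]
theorem measurable_rlKernel : Measurable (rlKernel α) :=
  Measurable.indicator (by fun_prop) measurableSet_Ioi

theorem integrableOn_Iic_rlKernel (hα : 0 < α) : IntegrableOn (rlKernel α) (Iic L) := by
  rw [rlKernel, integrableOn_indicator_iff measurableSet_Ioi, Ioi_inter_Iic]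
  exact (intervalIntegral.intervalIntegrable_rpow' (by linarith)).1.const_mul _

theorem rlKernel_mul_rlKernel_add (hh : 0 < h) (u : ℝ) :
    rlKernel α u * rlKernel α (u + h) = (Ioi (0 : ℝ)).indicator
      (fun u => (Gamma α)⁻¹ ^ 2 * (u ^ (α - 1) * (u + h) ^ (-(1 - α)))) u := by
  by_cases hu : u ∈ Ioi (0 : ℝ)
  · rw [indicator_of_mem hu, rlKernel_of_pos hu, rlKernel_of_pos (add_pos hu hh), neg_sub]
    ring
  · rw [indicator_of_notMem hu, rlKernel_of_nonpos (notMem_Ioi.1 hu), zero_mul]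

theorem integrable_rlKernel_mul_rlKernel_add (hα : 0 < α) (hα' : α < 1 / 2) (hh : h ≠ 0) :
    Integrable fun u => rlKernel α u * rlKernel α (u + h) := by
  wlog hpos : 0 < h generalizing h
  · have := (this (neg_ne_zero.2 hh) (neg_pos.2 (hh.lt_of_le (not_lt.1 hpos)))).comp_add_right h
    simpa only [add_neg_cancel_right, mul_comm] using this
  simp only [rlKernel_mul_rlKernel_add hpos]
  rw [integrable_indicator_iff measurableSet_Ioi]
  exact (integrableOn_rpow_mul_add_rpow_neg hα (by linarith) hpos).const_mul _

theorem two_mul_cos_mul_integral_rlKernel_mul_rlKernel_add (hα : 0 < α) (hα' : α < 1)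
    (hh : h ≠ 0) :
    2 * cos (α * π / 2) * ∫ u, rlKernel (α / 2) u * rlKernel (α / 2) (u + h) =
      rlKernel α h + rlKernel α (-h) := by
  wlog hpos : 0 < h generalizing h
  · have := this (neg_ne_zero.2 hh) (neg_pos.2 (hh.lt_of_le (not_lt.1 hpos)))
    rw [← integral_add_right_eq_self _ h] at this
    simpa only [add_neg_cancel_right, neg_neg, mul_comm (rlKernel _ (_ + h)),
      add_comm (rlKernel _ (-h))] using this
  have hΓ := two_mul_cos_mul_Gamma_mul_Gamma_one_sub
    (cos_mul_pi_div_two_pos (by linarith) hα').ne'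
  have hΓα := (Gamma_pos_of_pos hα).ne'
  have hΓhalf := (Gamma_pos_of_pos (half_pos hα)).ne'
  have hΓsub := (Gamma_pos_of_pos (show 0 < 1 - α / 2 by linarith)).ne'
  simp only [rlKernel_mul_rlKernel_add hpos]
  rw [integral_indicator measurableSet_Ioi, integral_const_mul,
    integral_rpow_mul_add_rpow_neg (half_pos hα) (by linarith) hpos, rlKernel_of_pos hpos,
    rlKernel_of_nonpos (neg_nonpos.2 hpos.le), add_zero,
    show 1 - α / 2 - α / 2 = 1 - α by ring, show α / 2 - (1 - α / 2) = α - 1 by ring]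
  generalize Gamma (1 - α / 2) = G at hΓ hΓsub ⊢
  field_simp
  linear_combination hΓ

end Kernel

section MeasurePreserving

theorem integral_comp_of_measurePreserving {X Y G : Type*} [MeasurableSpace X] [MeasurableSpace Y]
    [NormedAddCommGroup G] [NormedSpace ℝ G] {ν : Measure X} {ν' : Measure Y} {T : X → Y}
    {f : Y → G} (hT : MeasurePreserving T ν ν') (hf : AEStronglyMeasurable f ν') :
    ∫ x, f (T x) ∂ν = ∫ y, f y ∂ν' := by
  rw [← hT.map_eq] at hf ⊢
  exact (integral_map hT.aemeasurable hf).symm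

theorem measurePreserving_prodMk_sub {X Y E : Type*} [MeasurableSpace X] [MeasurableSpace Y]
    [AddGroup E] [MeasurableSpace E] [MeasurableAdd E] [MeasurableSub₂ E] {ν : Measure X}
    {ν' : Measure Y} {μ : Measure E} [SFinite ν] [SFinite μ] [μ.IsAddRightInvariant] {f : X → Y}
    {g : X → E} (hf : MeasurePreserving f ν ν') (hg : Measurable g) :
    MeasurePreserving (fun q : X × E => (f q.1, q.2 - g q.1)) (ν.prod μ) (ν'.prod μ) :=
  hf.skew_product (g := fun x z => z - g x) (by unfold Function.uncurry; fun_prop)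
    (.of_forall fun x => (measurePreserving_sub_right μ (g x)).map_eq)

theorem ae_fst_ne_zero {E : Type*} [MeasurableSpace E] {μ : Measure E} :
    ∀ᵐ q : ℝ × E ∂volume.prod μ, q.1 ≠ 0 :=
  Measure.quasiMeasurePreserving_fst.ae (Measure.ae_ne volume 0)

end MeasurePreserving

section DirectionalIntegral

variable {E : Type*} [AddCommGroup E] [Module ℝ E] {α L : ℝ} {e : E} {p : E → ℝ}

/-- The fractional integral of order `α` of `p` in the direction `e`, with base point at `-∞`.
For the partial Riemann–Liouville integrals on a rectangle, `p` is extended by zero. -/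
noncomputable def fracIntegralAlong (α : ℝ) (e : E) (p : E → ℝ) (z : E) : ℝ :=
  ∫ t, rlKernel α t * p (z - t • e)

/-- The density whose integral over `ℝ × E` is the energy `∫ p * fracIntegralAlong α e p`. -/
noncomputable def energyDensity (α : ℝ) (e : E) (p : E → ℝ) (q : ℝ × E) : ℝ :=
  rlKernel α q.1 * (p q.2 * p (q.2 - q.1 • e))

/-- The integrand of `∫ (fracIntegralAlong α e p) ^ 2`, the square being expanded into a double
integral over times `u` and `u + h` and the space variable being moved to `w = z - u • e`. -/
noncomputable def squareDensity (α : ℝ) (e : E) (p : E → ℝ) (q : ℝ × ℝ × E) : ℝ :=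
  rlKernel α q.1 * rlKernel α (q.1 + q.2.1) * (p q.2.2 * p (q.2.2 - q.2.1 • e))

theorem energyDensity_neg_shear (q : ℝ × E) :
    energyDensity α e p (-q.1, q.2 - q.1 • e) =
      rlKernel α (-q.1) * (p q.2 * p (q.2 - q.1 • e)) := by
  simp only [energyDensity, neg_smul, sub_neg_eq_add, sub_add_cancel, mul_comm (p q.2)]

theorem squareDensity_shear (u v : ℝ) (z : E) :
    squareDensity α e p (u, v - u, z - u • e) =
      rlKernel α u * p (z - u • e) * (rlKernel α v * p (z - v • e)) := by
  simp only [squareDensity, sub_smul, sub_sub_sub_cancel_right, add_sub_cancel]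
  ring

theorem integral_squareDensity_shear (z : E) :
    ∫ r : ℝ × ℝ, squareDensity α e p (r.1, r.2 - r.1, z - r.1 • e) ∂volume.prod volume =
      fracIntegralAlong α e p z ^ 2 := by
  simp only [squareDensity_shear]
  rw [integral_prod_mul (fun u => rlKernel α u * p (z - u • e))
    (fun v => rlKernel α v * p (z - v • e)), sq, fracIntegralAlong]

variable [MeasurableSpace E] {μ : Measure E} [SFinite μ]

theorem integrable_mul_fracIntegralAlong (hE : Integrable (energyDensity α e p) (volume.prod μ)) :
    Integrable (fun z => p z * fracIntegralAlong α e p z) μ := by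
  refine hE.integral_prod_right.congr (.of_forall fun z => ?_)
  simp only [energyDensity, fracIntegralAlong, mul_left_comm _ (p z), integral_const_mul]

theorem integral_energyDensity (hE : Integrable (energyDensity α e p) (volume.prod μ)) :
    ∫ q, energyDensity α e p q ∂volume.prod μ = ∫ z, p z * fracIntegralAlong α e p z ∂μ := by
  rw [integral_prod_symm _ hE]
  simp only [energyDensity, fracIntegralAlong, mul_left_comm _ (p _), integral_const_mul]

variable [MeasurableAdd E] [MeasurableSub₂ E] [MeasurableSMul ℝ E] [μ.IsAddRightInvariant]

theorem measurePreserving_shear :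
    MeasurePreserving (fun q : ℝ × E => (q.1, q.2 - q.1 • e)) (volume.prod μ) (volume.prod μ) :=
  measurePreserving_prodMk_sub (g := fun t : ℝ => t • e) (.id volume) (by fun_prop)

theorem measurePreserving_neg_shear :
    MeasurePreserving (fun q : ℝ × E => (-q.1, q.2 - q.1 • e)) (volume.prod μ) (volume.prod μ) :=
  measurePreserving_prodMk_sub (g := fun t : ℝ => t • e) (Measure.measurePreserving_neg volume)
    (by fun_prop)

theorem measurePreserving_squareShear :
    MeasurePreserving (fun q : (ℝ × ℝ) × E => (q.1.1, q.1.2 - q.1.1, q.2 - q.1.1 • e))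
      ((volume.prod volume).prod μ) (volume.prod (volume.prod μ)) :=
  (measurePreserving_prodAssoc volume volume μ).comp <|
    measurePreserving_prodMk_sub (g := fun r : ℝ × ℝ => r.1 • e)
      (measurePreserving_prodMk_sub (g := id) (.id volume) measurable_id) (by fun_prop)

theorem aestronglyMeasurable_mul_comp_shear (hp : AEStronglyMeasurable p μ) :
    AEStronglyMeasurable (fun q : ℝ × E => p q.2 * p (q.2 - q.1 • e)) (volume.prod μ) :=
  hp.comp_snd.mul (hp.comp_snd.comp_measurePreserving measurePreserving_shear)

theorem integrable_energyDensity_symm (hE : Integrable (energyDensity α e p) (volume.prod μ)) :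
    Integrable (fun q : ℝ × E =>
      (rlKernel α q.1 + rlKernel α (-q.1)) * (p q.2 * p (q.2 - q.1 • e))) (volume.prod μ) := by
  simp only [add_mul, ← energyDensity_neg_shear]
  exact hE.add (measurePreserving_neg_shear.integrable_comp_of_integrable hE)

theorem integral_energyDensity_symm (hE : Integrable (energyDensity α e p) (volume.prod μ)) :
    ∫ q : ℝ × E, (rlKernel α q.1 + rlKernel α (-q.1)) * (p q.2 * p (q.2 - q.1 • e))
        ∂volume.prod μ = 2 * ∫ q, energyDensity α e p q ∂volume.prod μ := by
  have hshear := (measurePreserving_neg_shear (e := e)).integrable_comp_of_integrable hE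
  simp only [add_mul, ← energyDensity_neg_shear]
  rw [two_mul]
  exact (integral_add hE hshear).trans <| congrArg _ <|
    integral_comp_of_measurePreserving measurePreserving_neg_shear hE.aestronglyMeasurable

theorem integrable_fracIntegralAlong_sq
    (hS : Integrable (squareDensity α e p) (volume.prod (volume.prod μ))) :
    Integrable (fun z => fracIntegralAlong α e p z ^ 2) μ := by
  simp only [← integral_squareDensity_shear]
  exact (measurePreserving_squareShear.integrable_comp_of_integrable hS).integral_prod_right

theorem integral_fracIntegralAlong_sq
    (hS : Integrable (squareDensity α e p) (volume.prod (volume.prod μ))) :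
    ∫ z, fracIntegralAlong α e p z ^ 2 ∂μ =
      ∫ q, squareDensity α e p q ∂volume.prod (volume.prod μ) := by
  simp only [← integral_squareDensity_shear]
  rw [← integral_comp_of_measurePreserving measurePreserving_squareShear hS.aestronglyMeasurable]
  exact (integral_prod_symm _
    (measurePreserving_squareShear.integrable_comp_of_integrable hS)).symm

theorem integrable_squareDensity (hα : 0 < α) (hα' : α < 1) (hp : AEStronglyMeasurable p μ)
    (hE : Integrable (energyDensity α e p) (volume.prod μ)) :
    Integrable (squareDensity (α / 2) e p) (volume.prod (volume.prod μ)) := by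
  have hmeas : AEStronglyMeasurable (squareDensity (α / 2) e p) (volume.prod (volume.prod μ)) :=
    (show Measurable fun q : ℝ × ℝ × E => rlKernel (α / 2) q.1 * rlKernel (α / 2) (q.1 + q.2.1) by
      fun_prop).aestronglyMeasurable.mul (aestronglyMeasurable_mul_comp_shear hp).comp_snd
  have hcos : 0 < 2 * cos (α * π / 2) :=
    mul_pos two_pos (cos_mul_pi_div_two_pos (by linarith) hα')
  refine (integrable_prod_iff' hmeas).2 ⟨?_, ?_⟩
  · filter_upwards [ae_fst_ne_zero] with q hq
    have hcorr := integrable_rlKernel_mul_rlKernel_add (half_pos hα) (by linarith) hq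
    exact hcorr.mul_const (p q.2 * p (q.2 - q.1 • e))
  · refine ((integrable_energyDensity_symm hE).norm.const_mul (2 * cos (α * π / 2))⁻¹).congr ?_
    filter_upwards [ae_fst_ne_zero] with q hq
    have hhalf : ∀ t, 0 ≤ rlKernel (α / 2) t := rlKernel_nonneg (half_pos hα).le
    have hfull : ∀ t, 0 ≤ rlKernel α t := rlKernel_nonneg hα.le
    simp only [squareDensity, norm_mul _ (p q.2 * p (q.2 - q.1 • e)),
      norm_of_nonneg (mul_nonneg (hhalf _) (hhalf _)),
      norm_of_nonneg (add_nonneg (hfull q.1) (hfull (-q.1)))]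
    rw [integral_mul_const, ← two_mul_cos_mul_integral_rlKernel_mul_rlKernel_add hα hα' hq,
      mul_assoc, inv_mul_cancel_left₀ hcos.ne']

theorem cos_mul_integral_fracIntegralAlong_sq (hα : 0 < α) (hα' : α < 1)
    (hp : AEStronglyMeasurable p μ) (hE : Integrable (energyDensity α e p) (volume.prod μ)) :
    cos (α * π / 2) * ∫ z, fracIntegralAlong (α / 2) e p z ^ 2 ∂μ =
      ∫ z, p z * fracIntegralAlong α e p z ∂μ := by
  have hS := integrable_squareDensity hα hα' hp hE
  refine mul_left_cancel₀ two_ne_zero ?_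
  rw [integral_fracIntegralAlong_sq hS, integral_prod_symm _ hS, ← integral_energyDensity hE,
    ← integral_energyDensity_symm hE, ← mul_assoc, ← integral_const_mul]
  refine integral_congr_ae ?_
  filter_upwards [ae_fst_ne_zero] with q hq
  simp only [squareDensity]
  rw [integral_mul_const, ← mul_assoc,
    two_mul_cos_mul_integral_rlKernel_mul_rlKernel_add hα hα' hq]

theorem integrable_energyDensity (hα : 0 < α) (hp : MemLp p 2 μ)
    (hL : ∀ z t, L < t → p z * p (z - t • e) = 0) :
    Integrable (energyDensity α e p) (volume.prod μ) := by
  set k := (Iic L).indicator (rlKernel α)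
  have hk : Integrable k :=
    (integrable_indicator_iff measurableSet_Iic).2 (integrableOn_Iic_rlKernel hα)
  have hmajorant : Integrable (fun q : ℝ × E => k q.1 * p q.2 ^ 2) (volume.prod μ) :=
    hk.mul_prod hp.integrable_sq
  have hshear : Integrable (fun q : ℝ × E => k q.1 * p (q.2 - q.1 • e) ^ 2) (volume.prod μ) :=
    measurePreserving_shear.integrable_comp_of_integrable hmajorant
  refine (hmajorant.add hshear).mono' (measurable_rlKernel.aestronglyMeasurable.comp_fst.mul
    (aestronglyMeasurable_mul_comp_shear hp.1)) (.of_forall fun q => ?_)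
  have hkq : 0 ≤ rlKernel α q.1 := rlKernel_nonneg hα.le _
  by_cases hq : q.1 ≤ L
  · have hamgm := two_mul_le_add_sq |p q.2| |p (q.2 - q.1 • e)|
    simp only [energyDensity, Pi.add_apply, k, indicator_of_mem (mem_Iic.2 hq), norm_mul,
      norm_of_nonneg hkq, norm_eq_abs, ← mul_add]
    gcongr
    rw [sq_abs, sq_abs] at hamgm
    nlinarith [abs_nonneg (p q.2), abs_nonneg (p (q.2 - q.1 • e))]
  · simp [energyDensity, k, hL _ _ (not_le.1 hq), indicator_of_notMem (notMem_Iic.2 (not_le.1 hq))]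

end DirectionalIntegral

section Restriction

variable {E : Type*} [AddCommGroup E] [Module ℝ E] [MeasurableSpace E] {μ : Measure E}
  [MeasurableAdd E] [MeasurableSub₂ E] [MeasurableSMul ℝ E] [SFinite μ] [μ.IsAddRightInvariant]
  {α L : ℝ} {e : E} {s : Set E} {p : E → ℝ}

theorem integrable_energyDensity_indicator (hα : 0 < α) (hs : MeasurableSet s)
    (hp : MemLp p 2 (μ.restrict s)) (hL : ∀ z ∈ s, ∀ t, L < t → z - t • e ∉ s) :
    Integrable (energyDensity α e (s.indicator p)) (volume.prod μ) := by
  refine integrable_energyDensity (L := L) hα ((memLp_indicator_iff_restrict hs).2 hp) ?_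
  intro z t ht
  by_cases hz : z ∈ s
  · rw [indicator_of_notMem (hL z hz t ht), mul_zero]
  · rw [indicator_of_notMem hz, zero_mul]

theorem integrableOn_mul_fracIntegralAlong_indicator (hα : 0 < α) (hs : MeasurableSet s)
    (hp : MemLp p 2 (μ.restrict s)) (hL : ∀ z ∈ s, ∀ t, L < t → z - t • e ∉ s) :
    IntegrableOn (fun z => p z * fracIntegralAlong α e (s.indicator p) z) s μ :=
  (integrable_mul_fracIntegralAlong
    (integrable_energyDensity_indicator hα hs hp hL)).integrableOn.congr_fun
      (fun z hz => by simp only [indicator_of_mem hz]) hs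

theorem integrable_fracIntegralAlong_indicator_sq (hα : 0 < α) (hα' : α < 1)
    (hs : MeasurableSet s) (hp : MemLp p 2 (μ.restrict s))
    (hL : ∀ z ∈ s, ∀ t, L < t → z - t • e ∉ s) :
    Integrable (fun z => fracIntegralAlong (α / 2) e (s.indicator p) z ^ 2) μ :=
  integrable_fracIntegralAlong_sq <| integrable_squareDensity hα hα'
    ((memLp_indicator_iff_restrict hs).2 hp).aestronglyMeasurable
    (integrable_energyDensity_indicator hα hs hp hL)

theorem cos_mul_setIntegral_fracIntegralAlong_indicator_sq_le (hα : 0 < α) (hα' : α < 1)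
    (hs : MeasurableSet s) (hp : MemLp p 2 (μ.restrict s))
    (hL : ∀ z ∈ s, ∀ t, L < t → z - t • e ∉ s) :
    cos (α * π / 2) * ∫ z in s, fracIntegralAlong (α / 2) e (s.indicator p) z ^ 2 ∂μ ≤
      ∫ z in s, p z * fracIntegralAlong α e (s.indicator p) z ∂μ := by
  have hcos : 0 ≤ cos (α * π / 2) :=
    (cos_mul_pi_div_two_pos (by linarith) hα').le
  calc
    _ ≤ cos (α * π / 2) * ∫ z, fracIntegralAlong (α / 2) e (s.indicator p) z ^ 2 ∂μ :=
      mul_le_mul_of_nonneg_left (setIntegral_le_integral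
        (integrable_fracIntegralAlong_indicator_sq hα hα' hs hp hL)
        (.of_forall fun _ => sq_nonneg _)) hcos
    _ = ∫ z, s.indicator p z * fracIntegralAlong α e (s.indicator p) z ∂μ :=
      cos_mul_integral_fracIntegralAlong_sq hα hα'
        ((memLp_indicator_iff_restrict hs).2 hp).aestronglyMeasurable
        (integrable_energyDensity_indicator hα hs hp hL)
    _ = _ := by
      simp only [← indicator_mul_left]
      exact integral_indicator hs

theorem min_cos_mul_setIntegral_fracIntegralAlong_indicator_sq_add_sq_le {α₁ α₂ L₁ L₂ : ℝ}
    {e₁ e₂ : E} {p q : E → ℝ} (hα₁ : 0 < α₁) (hα₁' : α₁ < 1) (hα₂ : 0 < α₂) (hα₂' : α₂ < 1)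
    (hs : MeasurableSet s) (hp : MemLp p 2 (μ.restrict s)) (hq : MemLp q 2 (μ.restrict s))
    (hL₁ : ∀ z ∈ s, ∀ t, L₁ < t → z - t • e₁ ∉ s) (hL₂ : ∀ z ∈ s, ∀ t, L₂ < t → z - t • e₂ ∉ s) :
    min (cos (α₁ * π / 2)) (cos (α₂ * π / 2)) *
        ∫ z in s, (fracIntegralAlong (α₁ / 2) e₁ (s.indicator p) z ^ 2 +
          fracIntegralAlong (α₂ / 2) e₂ (s.indicator q) z ^ 2) ∂μ ≤
      ∫ z in s, (p z * fracIntegralAlong α₁ e₁ (s.indicator p) z +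
        q z * fracIntegralAlong α₂ e₂ (s.indicator q) z) ∂μ := by
  rw [integral_add
      (integrable_fracIntegralAlong_indicator_sq hα₁ hα₁' hs hp hL₁).integrableOn
      (integrable_fracIntegralAlong_indicator_sq hα₂ hα₂' hs hq hL₂).integrableOn,
    integral_add (integrableOn_mul_fracIntegralAlong_indicator hα₁ hs hp hL₁)
      (integrableOn_mul_fracIntegralAlong_indicator hα₂ hs hq hL₂), mul_add]
  gcongr ?_ + ?_
  · grw [min_le_left, cos_mul_setIntegral_fracIntegralAlong_indicator_sq_le hα₁ hα₁' hs hp hL₁]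
  · grw [min_le_right, cos_mul_setIntegral_fracIntegralAlong_indicator_sq_le hα₂ hα₂' hs hq hL₂]

end Restriction

section Rectangle

variable {a b c d α x : ℝ} {f : ℝ → ℝ} {p : ℝ × ℝ → ℝ} {z : ℝ × ℝ}

theorem integral_rlKernel_mul_indicator_sub (hx : x ∈ Ioo a b) :
    ∫ t, rlKernel α t * (Ioo a b).indicator f (x - t) =
      1 / Gamma α * ∫ s in a..x, (x - s) ^ (α - 1) * f s := by
  have hintegrand (s : ℝ) : rlKernel α (x - s) * (Ioo a b).indicator f s =
      (Ioo a x).indicator (fun s => 1 / Gamma α * ((x - s) ^ (α - 1) * f s)) s := by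
    by_cases hs : s ∈ Ioo a x
    · rw [indicator_of_mem hs, indicator_of_mem (Ioo_subset_Ioo_right hx.2.le hs),
        rlKernel_of_pos (sub_pos.2 hs.2)]
      ring
    · rw [indicator_of_notMem hs]
      rcases le_or_gt x s with hxs | hsx
      · rw [rlKernel_of_nonpos (sub_nonpos.2 hxs), zero_mul]
      · rw [indicator_of_notMem fun hs' => hs ⟨hs'.1, hsx⟩, mul_zero]
  rw [← integral_sub_left_eq_self _ volume x]
  simp only [sub_sub_cancel, hintegrand]
  rw [integral_indicator measurableSet_Ioo, integral_const_mul,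
    intervalIntegral.integral_of_le hx.1.le, integral_Ioc_eq_integral_Ioo]

theorem leftRLx_eq_fracIntegralAlong_indicator (hz : z ∈ Ioo a b ×ˢ Ioo c d) :
    leftRLx a α p z = fracIntegralAlong α (1, 0) ((Ioo a b ×ˢ Ioo c d).indicator p) z := by
  rw [leftRLx, ← integral_rlKernel_mul_indicator_sub hz.1, fracIntegralAlong]
  congr with t
  have hshift : z - t • (1, 0) = (z.1 - t, z.2) := by ext <;> simp
  rw [hshift]
  simp [indicator, hz.2.1, hz.2.2]

theorem leftRLy_eq_fracIntegralAlong_indicator (hz : z ∈ Ioo a b ×ˢ Ioo c d) :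
    leftRLy c α p z = fracIntegralAlong α (0, 1) ((Ioo a b ×ˢ Ioo c d).indicator p) z := by
  rw [leftRLy, ← integral_rlKernel_mul_indicator_sub hz.2, fracIntegralAlong]
  congr with t
  have hshift : z - t • (0, 1) = (z.1, z.2 - t) := by ext <;> simp
  rw [hshift]
  simp [indicator, hz.1.1, hz.1.2]

theorem sub_smul_one_zero_notMem (hz : z ∈ Ioo a b ×ˢ Ioo c d) (t : ℝ) (ht : b - a < t) :
    z - t • (1, 0) ∉ Ioo a b ×ˢ Ioo c d := fun h => by
  have hx : a < z.1 - t := by simpa using h.1.1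
  linarith [hz.1.2]

theorem sub_smul_zero_one_notMem (hz : z ∈ Ioo a b ×ˢ Ioo c d) (t : ℝ) (ht : d - c < t) :
    z - t • (0, 1) ∉ Ioo a b ×ˢ Ioo c d := fun h => by
  have hy : c < z.2 - t := by simpa using h.2.1
  linarith [hz.2.2]

end Rectangle

theorem memLp_fderiv_apply {E F : Type*} [NormedAddCommGroup E] [NormedSpace ℝ E]
    [MeasurableSpace E] [OpensMeasurableSpace E] [NormedAddCommGroup F] [NormedSpace ℝ F]
    {μ : Measure E} [IsFiniteMeasureOnCompacts μ] {r : ENNReal} {v : E → F} (hv : ContDiff ℝ 1 v)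
    (hcs : HasCompactSupport v) (w : E) : MemLp (fun z => fderiv ℝ v z w) r μ :=
  ((hv.continuous_fderiv one_ne_zero).clm_apply continuous_const).memLp_of_hasCompactSupport
    (hcs.fderiv_apply ℝ w)

theorem stmt16_general {a b c d α₁ α₂ : ℝ} (hα₁0 : 0 < α₁) (hα₁1 : α₁ < 1) (hα₂0 : 0 < α₂)
    (hα₂1 : α₂ < 1) {p q : ℝ × ℝ → ℝ} (hp : MemLp p 2 (volume.restrict (Ioo a b ×ˢ Ioo c d)))
    (hq : MemLp q 2 (volume.restrict (Ioo a b ×ˢ Ioo c d))) :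
    min (cos (α₁ * π / 2)) (cos (α₂ * π / 2)) *
        ∫ z in Ioo a b ×ˢ Ioo c d, (leftRLx a (α₁ / 2) p z ^ 2 + leftRLy c (α₂ / 2) q z ^ 2) ≤
      ∫ z in Ioo a b ×ˢ Ioo c d, (p z * leftRLx a α₁ p z + q z * leftRLy c α₂ q z) := by
  have hΩ : MeasurableSet (Ioo a b ×ˢ Ioo c d) := measurableSet_Ioo.prod measurableSet_Ioo
  have hcoercive := min_cos_mul_setIntegral_fracIntegralAlong_indicator_sq_add_sq_le hα₁0 hα₁1
    hα₂0 hα₂1 hΩ hp hq (fun _ => sub_smul_one_zero_notMem) (fun _ => sub_smul_zero_one_notMem)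
  refine le_of_eq_of_le (congrArg _ (setIntegral_congr_fun hΩ fun z hz => ?_))
    (hcoercive.trans_eq (setIntegral_congr_fun hΩ fun z hz => ?_)) <;>
  simp only [leftRLx_eq_fracIntegralAlong_indicator hz, leftRLy_eq_fracIntegralAlong_indicator hz]

theorem stmt16 (a b c d α₁ α₂ : ℝ) (hab : a < b) (hcd : c < d)
    (hα₁0 : 0 < α₁) (hα₁1 : α₁ < 1) (hα₂0 : 0 < α₂) (hα₂1 : α₂ < 1)
    (v : ℝ × ℝ → ℝ) (hv : ContDiff ℝ (⊤ : ℕ∞) v) (hcs : HasCompactSupport v)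
    (hsupp : tsupport v ⊆ Set.Ioo a b ×ˢ Set.Ioo c d) :
    ∫ z in Set.Ioo a b ×ˢ Set.Ioo c d,
        (partialX v z * leftRLx a α₁ (partialX v) z +
          partialY v z * leftRLy c α₂ (partialY v) z) ≥
      min (Real.cos (α₁ * Real.pi / 2)) (Real.cos (α₂ * Real.pi / 2)) *
        ∫ z in Set.Ioo a b ×ˢ Set.Ioo c d,
          ((leftRLx a (α₁ / 2) (partialX v) z) ^ 2 +
            (leftRLy c (α₂ / 2) (partialY v) z) ^ 2) := by
  have hgrad (w : ℝ × ℝ) : MemLp (fun z => fderiv ℝ v z w) 2 :=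
    memLp_fderiv_apply (hv.of_le (by simp)) hcs w
  exact stmt16_general hα₁0 hα₁1 hα₂0 hα₂1 ((hgrad _).restrict _) ((hgrad _).restrict _)
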